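/- arXiv:1307.8373 — 2 statements merged into one kernel-verified Lean document; each statement's English description precedes it below -/
import Mathlib

section
/- Let (T_n) be a sequence of weakly continuous operators on M(Ω) that is order bounded in L(M(Ω)). Then S = sup_n T_n exists in L(M(Ω)) and S is weakly continuous, with associated transition kernel obtainable (after reducing to an increasing sequence of positive operators) as the pointwise supremum of the kernels. Hence the weakly continuous operators form a countably order complete sublattice of L(M(Ω)). -/
/-!
The supremum is built from positive increments. For a weakly continuous `T` with kernel `k`, the
positive part `T ∨ 0` is the operator of the kernel `x ↦ (k x)⁺` (`IsWC.exists_posPart`). A Polish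
space has a countable algebra of sets `Dₙ` generating its σ-algebra, so
`(k x)⁺(A) = supₙ (k x (A ∩ Dₙ))⁺`, which gives measurability in `x`
(`posPart_apply_eq_iSup`). The same formula gives minimality: if `R ≥ 0` and `R ≥ T`, then
`∫ maxₙ (k x (A ∩ Dₙ))⁺ dμ ≤ R μ (A)`, as seen by restricting `μ` to the sets where the various
terms attain the maximum (`lintegral_iSup_le_of_forall_max`).

Iterating `T ∨ U = U + (T - U)⁺` gives `T₀ ∨ ⋯ ∨ Tₙ = T₀ + ∑_{i<n} Kᵢ`, where `Kᵢ` is the operator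
of a positive finite kernel `δᵢ` (`exists_increments`). If `Bd` bounds all the `Tₙ`, then
`Bd - T₀` is positive, hence bounded on point masses (`exists_bound_dirac`); as it dominates
`∑_{i<n} Kᵢ`, the kernel `∑ δᵢ` is finite. By monotone convergence its operator is the supremum of
the partial sums (`isLUB_kernelOp_sum`), so `S = T₀ + ∑ Kᵢ` is the supremum of the `Tₙ`.
-/

open MeasureTheory Topology Filter
open scoped NNReal ENNReal BoundedContinuousFunction

noncomputable def sInt {Ω : Type*} [MeasurableSpace Ω] (μ : SignedMeasure Ω) (f : Ω → ℝ) : ℝ :=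
  (∫ x, f x ∂μ.toJordanDecomposition.posPart) - ∫ x, f x ∂μ.toJordanDecomposition.negPart

def IsTransKernel {Ω : Type*} [MeasurableSpace Ω] (k : Ω → SignedMeasure Ω) : Prop :=
  ∀ A : Set Ω, MeasurableSet A → Measurable fun x => k x A

def IsBddKernel {Ω : Type*} [MeasurableSpace Ω] (k : Ω → SignedMeasure Ω) : Prop :=
  IsTransKernel k ∧ ∃ C : ℝ≥0, ∀ x, (k x).totalVariation Set.univ ≤ C

def GivenByKernel {Ω : Type*} [MeasurableSpace Ω]
    (T : SignedMeasure Ω →ₗ[ℝ] SignedMeasure Ω) (k : Ω → SignedMeasure Ω) : Prop :=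
  ∀ (μ : SignedMeasure Ω) (A : Set Ω), MeasurableSet A → T μ A = sInt μ (fun x => k x A)

def IsBdMeasurable {Ω : Type*} [MeasurableSpace Ω] (f : Ω → ℝ) : Prop :=
  Measurable f ∧ ∃ C : ℝ, ∀ x, |f x| ≤ C

instance totalVariation_isFiniteMeasure {Ω : Type*} [MeasurableSpace Ω] (μ : SignedMeasure Ω) :
    IsFiniteMeasure μ.totalVariation := by
  unfold SignedMeasure.totalVariation; infer_instance

open ProbabilityTheory

/-! ### Bounded kernels and integrals against signed measures -/

theorem exists_abs_le {Ω : Type*} [MeasurableSpace Ω] {k : Ω → SignedMeasure Ω}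
    (hk : IsBddKernel k) :
    ∃ C : ℝ, ∀ x, ∀ A, MeasurableSet A → |k x A| ≤ C := by
  obtain ⟨-, C, hC⟩ := hk
  refine ⟨C, fun x A hA => ?_⟩
  have h : (k x).toJordanDecomposition.posPart Set.univ
      + (k x).toJordanDecomposition.negPart Set.univ ≤ C := by
    simpa [SignedMeasure.totalVariation] using hC x
  have h2 : (k x).toJordanDecomposition.posPart.real Set.univ
      + (k x).toJordanDecomposition.negPart.real Set.univ ≤ C := by
    rw [measureReal_def, measureReal_def, ← ENNReal.toReal_add (by simp) (by simp)]
    exact ENNReal.toReal_le_coe_of_le_coe h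
  rw [SignedMeasure.apply_eq_posPart_real_sub_negPart_real _ hA]
  have h3 : (k x).toJordanDecomposition.posPart.real A
      ≤ (k x).toJordanDecomposition.posPart.real Set.univ := measureReal_mono (Set.subset_univ _)
  have h4 : (k x).toJordanDecomposition.negPart.real A
      ≤ (k x).toJordanDecomposition.negPart.real Set.univ := measureReal_mono (Set.subset_univ _)
  have h5 : 0 ≤ (k x).toJordanDecomposition.posPart.real A := measureReal_nonneg
  have h6 : 0 ≤ (k x).toJordanDecomposition.negPart.real A := measureReal_nonneg
  rw [abs_le]; constructor <;> linarith

/-- A set `H` carrying the positive part of `m`, with `Hᶜ` carrying the negative part. -/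
theorem exists_hahn {Ω : Type*} [MeasurableSpace Ω] (m : SignedMeasure Ω) :
    ∃ H, MeasurableSet H ∧ ∀ A, MeasurableSet A →
      m.toJordanDecomposition.posPart.real A = m (A ∩ H) ∧
      m.toJordanDecomposition.negPart.real A = - m (A ∩ Hᶜ) := by
  obtain ⟨H, hH, h2, h3, hp, hn⟩ := m.toJordanDecomposition_spec
  refine ⟨H, hH, fun A hA => ⟨?_, ?_⟩⟩
  · rw [hp, SignedMeasure.toMeasureOfZeroLE_real_apply _ _ _ hA, Set.inter_comm]
  · rw [hn, SignedMeasure.toMeasureOfLEZero_real_apply _ _ _ hA, Set.inter_comm]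

theorem isBddKernel_of_abs_le {Ω : Type*} [MeasurableSpace Ω] {k : Ω → SignedMeasure Ω}
    (hk : IsTransKernel k) {C : ℝ} (hC : ∀ x, ∀ A, MeasurableSet A → |k x A| ≤ C) :
    IsBddKernel k := by
  refine ⟨hk, (2 * C).toNNReal, fun x => ?_⟩
  obtain ⟨H, hH, h⟩ := exists_hahn (k x)
  have h1 := h _ MeasurableSet.univ
  have h2 := abs_le.1 (hC x _ (MeasurableSet.univ.inter hH))
  have h3 := abs_le.1 (hC x _ (MeasurableSet.univ.inter hH.compl))
  have h4 : (k x).totalVariation.real Set.univ ≤ 2 * C := by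
    rw [SignedMeasure.totalVariation, measureReal_add_apply]
    linarith
  rw [← ofReal_measureReal (by simp)]
  exact ENNReal.ofReal_le_ofReal h4

theorem IsBdMeasurable.integrable {Ω : Type*} [MeasurableSpace Ω] {f : Ω → ℝ}
    (hf : IsBdMeasurable f) (a : Measure Ω) [IsFiniteMeasure a] : Integrable f a := by
  obtain ⟨hm, C, hC⟩ := hf
  exact Integrable.of_bound hm.aestronglyMeasurable C (ae_of_all _ hC)

theorem IsBddKernel.isBdMeasurable {Ω : Type*} [MeasurableSpace Ω] {k : Ω → SignedMeasure Ω}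
    (hk : IsBddKernel k) {A : Set Ω} (hA : MeasurableSet A) :
    IsBdMeasurable fun x => k x A :=
  ⟨hk.1 A hA, (exists_abs_le hk).imp fun _ h x => h x A hA⟩

/-- The integral against a signed measure may be computed from any representation of it as a
difference of finite measures. -/
theorem sInt_eq_of_sub {Ω : Type*} [MeasurableSpace Ω] {f : Ω → ℝ} (hf : IsBdMeasurable f)
    (a b : Measure Ω) [IsFiniteMeasure a] [IsFiniteMeasure b] {μ : SignedMeasure Ω}
    (h : μ = a.toSignedMeasure - b.toSignedMeasure) :
    sInt μ f = ∫ x, f x ∂a - ∫ x, f x ∂b := by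
  have h1 : μ.toJordanDecomposition.posPart.toSignedMeasure
      - μ.toJordanDecomposition.negPart.toSignedMeasure = μ :=
    μ.toSignedMeasure_toJordanDecomposition
  have h2 : μ.toJordanDecomposition.posPart + b = a + μ.toJordanDecomposition.negPart := by
    rw [← Measure.toSignedMeasure_eq_toSignedMeasure_iff, Measure.toSignedMeasure_add,
      Measure.toSignedMeasure_add]
    rw [h] at h1
    rw [← sub_eq_zero, ← sub_eq_zero.2 h1, h]; abel
  have h3 : ∫ x, f x ∂(μ.toJordanDecomposition.posPart + b)
      = ∫ x, f x ∂(a + μ.toJordanDecomposition.negPart) := by rw [h2]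
  rw [integral_add_measure (hf.integrable _) (hf.integrable _),
    integral_add_measure (hf.integrable _) (hf.integrable _)] at h3
  unfold sInt
  linarith

theorem eq_posPart_sub_negPart {Ω : Type*} [MeasurableSpace Ω] (μ : SignedMeasure Ω) :
    μ = μ.toJordanDecomposition.posPart.toSignedMeasure
      - μ.toJordanDecomposition.negPart.toSignedMeasure :=
  μ.toSignedMeasure_toJordanDecomposition.symm

theorem sInt_toSignedMeasure {Ω : Type*} [MeasurableSpace Ω] {f : Ω → ℝ} (hf : IsBdMeasurable f)
    (a : Measure Ω) [IsFiniteMeasure a] : sInt a.toSignedMeasure f = ∫ x, f x ∂a := by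
  rw [sInt_eq_of_sub hf a 0 (by simp)]; simp

theorem sInt_add_left {Ω : Type*} [MeasurableSpace Ω] {f : Ω → ℝ} (hf : IsBdMeasurable f)
    (μ ν : SignedMeasure Ω) : sInt (μ + ν) f = sInt μ f + sInt ν f := by
  rw [sInt_eq_of_sub hf (μ.toJordanDecomposition.posPart + ν.toJordanDecomposition.posPart)
    (μ.toJordanDecomposition.negPart + ν.toJordanDecomposition.negPart),
    integral_add_measure (hf.integrable _) (hf.integrable _),
    integral_add_measure (hf.integrable _) (hf.integrable _)]
  · unfold sInt; ring
  · rw [Measure.toSignedMeasure_add, Measure.toSignedMeasure_add]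
    nth_rewrite 1 [eq_posPart_sub_negPart μ, eq_posPart_sub_negPart ν]
    abel

theorem sInt_smul_left {Ω : Type*} [MeasurableSpace Ω] (f : Ω → ℝ)
    (r : ℝ) (μ : SignedMeasure Ω) : sInt (r • μ) f = r * sInt μ f := by
  unfold sInt
  rw [SignedMeasure.toJordanDecomposition_smul_real]
  rcases le_or_gt 0 r with hr | hr
  · rw [JordanDecomposition.real_smul_posPart_nonneg _ _ hr,
      JordanDecomposition.real_smul_negPart_nonneg _ _ hr,
      integral_smul_nnreal_measure, integral_smul_nnreal_measure, NNReal.smul_def,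
      NNReal.smul_def, Real.coe_toNNReal r hr, smul_eq_mul, smul_eq_mul]
    ring
  · rw [JordanDecomposition.real_smul_posPart_neg _ _ hr,
      JordanDecomposition.real_smul_negPart_neg _ _ hr,
      integral_smul_nnreal_measure, integral_smul_nnreal_measure, NNReal.smul_def,
      NNReal.smul_def, Real.coe_toNNReal (-r) (by linarith), smul_eq_mul, smul_eq_mul]
    ring

theorem sInt_add_right {Ω : Type*} [MeasurableSpace Ω] {f g : Ω → ℝ} (hf : IsBdMeasurable f)
    (hg : IsBdMeasurable g) (μ : SignedMeasure Ω) :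
    sInt μ (fun x => f x + g x) = sInt μ f + sInt μ g := by
  unfold sInt
  rw [integral_add (hf.integrable _) (hg.integrable _),
    integral_add (hf.integrable _) (hg.integrable _)]
  ring

theorem sInt_neg_right {Ω : Type*} [MeasurableSpace Ω] (f : Ω → ℝ) (μ : SignedMeasure Ω) :
    sInt μ (fun x => - f x) = - sInt μ f := by
  unfold sInt
  rw [integral_neg, integral_neg]
  ring

/-! ### Weakly continuous operators -/

/-- Weak continuity of an operator: it is given by some bounded transition kernel. -/
def IsWC {Ω : Type*} [MeasurableSpace Ω] (T : SignedMeasure Ω →ₗ[ℝ] SignedMeasure Ω) : Prop :=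
  ∃ k : Ω → SignedMeasure Ω, IsBddKernel k ∧ GivenByKernel T k

theorem IsWC.add {Ω : Type*} [MeasurableSpace Ω] {T U : SignedMeasure Ω →ₗ[ℝ] SignedMeasure Ω}
    (hT : IsWC T) (hU : IsWC U) : IsWC (T + U) := by
  obtain ⟨k, hk, hTk⟩ := hT
  obtain ⟨l, hl, hUl⟩ := hU
  obtain ⟨C, hC⟩ := exists_abs_le hk
  obtain ⟨D, hD⟩ := exists_abs_le hl
  refine ⟨fun x => k x + l x, isBddKernel_of_abs_le (C := C + D) ?_ ?_, ?_⟩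
  · intro A hA
    exact (hk.1 A hA).add (hl.1 A hA)
  · intro x A hA
    exact (abs_add_le _ _).trans (add_le_add (hC x A hA) (hD x A hA))
  · intro μ A hA
    have := sInt_add_right (hk.isBdMeasurable hA) (hl.isBdMeasurable hA) μ
    rw [LinearMap.add_apply, add_apply, hTk μ A hA, hUl μ A hA]
    exact this.symm

theorem IsWC.neg {Ω : Type*} [MeasurableSpace Ω] {T : SignedMeasure Ω →ₗ[ℝ] SignedMeasure Ω}
    (hT : IsWC T) : IsWC (-T) := by
  obtain ⟨k, hk, hTk⟩ := hT
  obtain ⟨C, hC⟩ := exists_abs_le hk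
  refine ⟨fun x => -k x, isBddKernel_of_abs_le (C := C) ?_ ?_, ?_⟩
  · intro A hA
    exact (hk.1 A hA).neg
  · intro x A hA
    simpa using hC x A hA
  · intro μ A hA
    rw [LinearMap.neg_apply, neg_apply, hTk μ A hA]
    exact (sInt_neg_right _ μ).symm

theorem IsWC.sub {Ω : Type*} [MeasurableSpace Ω] {T U : SignedMeasure Ω →ₗ[ℝ] SignedMeasure Ω}
    (hT : IsWC T) (hU : IsWC U) : IsWC (T - U) :=
  sub_eq_add_neg T U ▸ hT.add hU.neg

theorem isBdMeasurable_real {Ω : Type*} [MeasurableSpace Ω] (κ : Kernel Ω Ω) [IsFiniteKernel κ]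
    {A : Set Ω} (hA : MeasurableSet A) : IsBdMeasurable fun x => (κ x).real A := by
  refine ⟨(κ.measurable_coe hA).ennreal_toReal, κ.bound.toReal, fun x => ?_⟩
  rw [abs_of_nonneg measureReal_nonneg]
  exact ENNReal.toReal_mono κ.bound_ne_top (κ.measure_le_bound x A)

theorem real_comp_eq {Ω : Type*} [MeasurableSpace Ω] (κ : Kernel Ω Ω) [IsFiniteKernel κ]
    (a : Measure Ω) [IsFiniteMeasure a] {A : Set Ω} (hA : MeasurableSet A) :
    (κ ∘ₘ a).real A = ∫ x, (κ x).real A ∂a := by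
  rw [measureReal_def, Measure.bind_apply hA κ.aemeasurable]
  exact (integral_toReal (κ.measurable_coe hA).aemeasurable
    (ae_of_all _ fun x => measure_lt_top _ _)).symm

theorem comp_sub_apply {Ω : Type*} [MeasurableSpace Ω] (κ : Kernel Ω Ω) [IsFiniteKernel κ]
    (μ : SignedMeasure Ω) {A : Set Ω} (hA : MeasurableSet A) :
    ((κ ∘ₘ μ.toJordanDecomposition.posPart).toSignedMeasure
      - (κ ∘ₘ μ.toJordanDecomposition.negPart).toSignedMeasure) A
      = sInt μ fun x => (κ x).real A := by
  rw [Measure.toSignedMeasure_sub_apply hA, real_comp_eq _ _ hA, real_comp_eq _ _ hA]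
  rfl

/-- The positive operator `μ ↦ ∫ κ(x, ·) μ(dx)` on signed measures attached to a finite
(positive) kernel `κ`. -/
noncomputable def kernelOp {Ω : Type*} [MeasurableSpace Ω] (κ : Kernel Ω Ω) [IsFiniteKernel κ] :
    SignedMeasure Ω →ₗ[ℝ] SignedMeasure Ω where
  toFun μ := (κ ∘ₘ μ.toJordanDecomposition.posPart).toSignedMeasure
      - (κ ∘ₘ μ.toJordanDecomposition.negPart).toSignedMeasure
  map_add' μ ν := by
    ext A hA
    rw [add_apply, comp_sub_apply _ _ hA, comp_sub_apply _ _ hA,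
      comp_sub_apply _ _ hA, sInt_add_left (isBdMeasurable_real κ hA)]
  map_smul' r μ := by
    ext A hA
    rw [RingHom.id_apply, smul_apply, comp_sub_apply _ _ hA,
      comp_sub_apply _ _ hA, sInt_smul_left, smul_eq_mul]

theorem kernelOp_apply {Ω : Type*} [MeasurableSpace Ω] (κ : Kernel Ω Ω) [IsFiniteKernel κ]
    (μ : SignedMeasure Ω) {A : Set Ω} (hA : MeasurableSet A) :
    kernelOp κ μ A = sInt μ fun x => (κ x).real A :=
  comp_sub_apply κ μ hA

theorem kernelOp_toSignedMeasure {Ω : Type*} [MeasurableSpace Ω] (κ : Kernel Ω Ω)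
    [IsFiniteKernel κ] (a : Measure Ω) [IsFiniteMeasure a] {A : Set Ω} (hA : MeasurableSet A) :
    kernelOp κ a.toSignedMeasure A = (∫⁻ x, κ x A ∂a).toReal := by
  rw [kernelOp_apply κ _ hA, sInt_toSignedMeasure (isBdMeasurable_real κ hA),
    ← real_comp_eq κ a hA, measureReal_def, Measure.bind_apply hA κ.aemeasurable]

theorem isWC_kernelOp {Ω : Type*} [MeasurableSpace Ω] (κ : Kernel Ω Ω) [IsFiniteKernel κ] :
    IsWC (kernelOp κ) := by
  refine ⟨fun x => (κ x).toSignedMeasure,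
    isBddKernel_of_abs_le (C := κ.bound.toReal) ?_ ?_, ?_⟩
  · intro A hA
    simp only [Measure.toSignedMeasure_apply_measurable hA]
    exact (isBdMeasurable_real κ hA).1
  · intro x A hA
    rw [Measure.toSignedMeasure_apply_measurable hA, abs_of_nonneg measureReal_nonneg]
    exact ENNReal.toReal_mono κ.bound_ne_top (κ.measure_le_bound x A)
  · intro μ A hA
    rw [kernelOp_apply κ μ hA]
    simp only [Measure.toSignedMeasure_apply_measurable hA]

/-! ### The order on operators -/

theorem exists_measure_of_nonneg {Ω : Type*} [MeasurableSpace Ω] {μ : SignedMeasure Ω}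
    (hμ : 0 ≤ μ) : ∃ a : Measure Ω, ∃ _ : IsFiniteMeasure a, μ = a.toSignedMeasure := by
  have h : 0 ≤[Set.univ] μ := by
    rw [VectorMeasure.restrict_univ, VectorMeasure.restrict_univ]; exact hμ
  exact ⟨μ.toMeasureOfZeroLE Set.univ MeasurableSet.univ h, inferInstance,
    (SignedMeasure.toMeasureOfZeroLE_toSignedMeasure μ h).symm⟩

/-- Pointwise order of operators on the positive cone, which is the order of `L(M(Ω))`. -/
def OpLE {Ω : Type*} [MeasurableSpace Ω] (T R : SignedMeasure Ω →ₗ[ℝ] SignedMeasure Ω) : Prop :=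
  ∀ μ : SignedMeasure Ω, 0 ≤ μ → T μ ≤ R μ

theorem opLE_iff {Ω : Type*} [MeasurableSpace Ω] {T R : SignedMeasure Ω →ₗ[ℝ] SignedMeasure Ω} :
    OpLE T R ↔ ∀ (a : Measure Ω) [IsFiniteMeasure a] (A : Set Ω), MeasurableSet A →
      T a.toSignedMeasure A ≤ R a.toSignedMeasure A := by
  constructor
  · intro h a _ A hA
    exact h _ (Measure.zero_le_toSignedMeasure a) A hA
  · intro h μ hμ A hA
    obtain ⟨a, _, rfl⟩ := exists_measure_of_nonneg hμ
    exact h a A hA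

theorem OpLE.sub {Ω : Type*} [MeasurableSpace Ω]
    {T R U : SignedMeasure Ω →ₗ[ℝ] SignedMeasure Ω} (h : OpLE T R) :
    OpLE (T - U) (R - U) := by
  intro μ hμ A hA
  simpa using h μ hμ A hA

theorem OpLE.le_sub_of_add_le {Ω : Type*} [MeasurableSpace Ω]
    {X R U : SignedMeasure Ω →ₗ[ℝ] SignedMeasure Ω} (h : OpLE (U + X) R) :
    OpLE X (R - U) := by
  intro μ hμ A hA
  have := h μ hμ A hA
  rw [LinearMap.add_apply, add_apply] at this
  rw [LinearMap.sub_apply, sub_apply]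
  linarith

theorem apply_mono_set {Ω : Type*} [MeasurableSpace Ω]
    {R : SignedMeasure Ω →ₗ[ℝ] SignedMeasure Ω} (hR : OpLE 0 R)
    (a : Measure Ω) [IsFiniteMeasure a] {A B : Set Ω} (hA : MeasurableSet A)
    (hB : MeasurableSet B) (h : A ⊆ B) :
    R a.toSignedMeasure A ≤ R a.toSignedMeasure B := by
  have h1 := opLE_iff.1 hR a (B \ A) (hB.diff hA)
  have h2 := VectorMeasure.of_add_of_sdiff (v := R a.toSignedMeasure) hA hB h
  simp only [LinearMap.zero_apply, zero_apply] at h1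
  linarith

theorem apply_nonneg {Ω : Type*} [MeasurableSpace Ω]
    {R : SignedMeasure Ω →ₗ[ℝ] SignedMeasure Ω} (hR : OpLE 0 R)
    (a : Measure Ω) [IsFiniteMeasure a] {A : Set Ω} (hA : MeasurableSet A) :
    0 ≤ R a.toSignedMeasure A := by
  simpa using opLE_iff.1 hR a A hA

theorem apply_restrict_add {Ω : Type*} [MeasurableSpace Ω]
    (R : SignedMeasure Ω →ₗ[ℝ] SignedMeasure Ω)
    (a : Measure Ω) [IsFiniteMeasure a] {B : Set Ω} (hB : MeasurableSet B) (A : Set Ω) :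
    R a.toSignedMeasure A = R (a.restrict B).toSignedMeasure A
      + R (a.restrict Bᶜ).toSignedMeasure A := by
  have : a.toSignedMeasure
      = (a.restrict B).toSignedMeasure + (a.restrict Bᶜ).toSignedMeasure := by
    rw [← Measure.toSignedMeasure_add, Measure.toSignedMeasure_eq_toSignedMeasure_iff,
      Measure.restrict_add_restrict_compl hB]
  rw [this, map_add, add_apply]

theorem apply_mono_measure {Ω : Type*} [MeasurableSpace Ω]
    {R : SignedMeasure Ω →ₗ[ℝ] SignedMeasure Ω} (hR : OpLE 0 R)
    {a b : Measure Ω} [IsFiniteMeasure a] [IsFiniteMeasure b] (h : a ≤ b)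
    {A : Set Ω} (hA : MeasurableSet A) :
    R a.toSignedMeasure A ≤ R b.toSignedMeasure A := by
  have h1 : 0 ≤ b.toSignedMeasure - a.toSignedMeasure :=
    fun B hB => by
      rw [Measure.toSignedMeasure_sub_apply hB]
      rw [zero_apply, sub_nonneg]
      exact ENNReal.toReal_mono (measure_ne_top b B) (h B)
  have h2 := hR _ h1 A hA
  rw [map_sub] at h2
  simpa using h2

/-! ### The positive part of a kernel operator -/

/-- A countable algebra generating the σ-algebra is dense in measure, simultaneously for all
finite measures. -/
theorem exists_dense_seq (Ω : Type*) [MeasurableSpace Ω]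
    [MeasurableSpace.CountablyGenerated Ω] :
    ∃ D : ℕ → Set Ω, (∀ n, MeasurableSet (D n)) ∧ ∀ (a : Measure Ω) [IsFiniteMeasure a]
      (s : Set Ω), MeasurableSet s →
      ∀ ε : ℝ, 0 < ε → ∃ n, a (symmDiff s (D n)) < ENNReal.ofReal ε := by
  set 𝒜 := generateSetAlgebra (MeasurableSpace.countableGeneratingSet Ω)
  have hc : 𝒜.Countable :=
    countable_generateSetAlgebra MeasurableSpace.countable_countableGeneratingSet
  have hgen : ‹MeasurableSpace Ω› = MeasurableSpace.generateFrom 𝒜 := by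
    rw [generateFrom_generateSetAlgebra_eq,
      MeasurableSpace.generateFrom_countableGeneratingSet]
  have halg : IsSetAlgebra 𝒜 := isSetAlgebra_generateSetAlgebra
  obtain ⟨D, hD⟩ := hc.exists_eq_range ⟨_, halg.univ_mem⟩
  have key (a : Measure Ω) [IsFiniteMeasure a] : a.MeasureDense 𝒜 :=
    Measure.MeasureDense.of_generateFrom_isSetAlgebra_finite a halg hgen
  refine ⟨D, fun n => (key 0).measurable _ (hD ▸ Set.mem_range_self n), fun a _ s hs ε hε => ?_⟩
  obtain ⟨t, ht, h⟩ := (key a).approx s hs (measure_ne_top _ _) ε hε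
  rw [hD] at ht
  obtain ⟨n, rfl⟩ := ht
  exact ⟨n, h⟩

/-- The supremum over all measurable subsets of `A` that defines `m⁺(A)` may be restricted to
traces of a sequence dense in measure: the Hahn set of `m` is approximated in total variation. This
makes `x ↦ (k x)⁺` measurable for a transition kernel `k`. -/
theorem posPart_apply_eq_iSup {Ω : Type*} [MeasurableSpace Ω] {D : ℕ → Set Ω}
    (hD : ∀ n, MeasurableSet (D n))
    (hdense : ∀ (a : Measure Ω) [IsFiniteMeasure a] (s : Set Ω), MeasurableSet s →
      ∀ ε : ℝ, 0 < ε → ∃ n, a (symmDiff s (D n)) < ENNReal.ofReal ε)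
    (m : SignedMeasure Ω) {A : Set Ω} (hA : MeasurableSet A) :
    m.toJordanDecomposition.posPart A = ⨆ n, ENNReal.ofReal (m (A ∩ D n)) := by
  set p := m.toJordanDecomposition.posPart with hp
  set q := m.toJordanDecomposition.negPart with hq
  have hm : ∀ B, MeasurableSet B → m B = p.real B - q.real B :=
    fun B hB => SignedMeasure.apply_eq_posPart_real_sub_negPart_real _ hB
  apply le_antisymm
  · refine ENNReal.le_of_forall_pos_le_add fun ε hε _ => ?_
    obtain ⟨H, hH, hHA⟩ := exists_hahn m
    obtain ⟨n, hn⟩ := hdense m.totalVariation H hH ε hε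
    have hAD := hA.inter (hD n)
    have h1 : p.real A = p.real (A ∩ H) := by
      rw [(hHA A hA).1, (hHA _ (hA.inter hH)).1, Set.inter_assoc, Set.inter_self]
    have h2 : q.real (A ∩ D n) = q.real (A ∩ D n ∩ Hᶜ) := by
      rw [(hHA _ hAD).2, (hHA _ (hAD.inter hH.compl)).2, Set.inter_assoc _ Hᶜ, Set.inter_self]
    have h3 : q.real (A ∩ D n ∩ Hᶜ) ≤ q.real (symmDiff H (D n)) :=
      measureReal_mono fun x hx => Or.inr ⟨hx.1.2, hx.2⟩
    have h4 : p.real (A ∩ H) ≤ p.real (A ∩ D n) + p.real (symmDiff H (D n)) := by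
      refine (measureReal_mono ?_).trans (measureReal_union_le _ _)
      intro x hx
      by_cases hxD : x ∈ D n
      · exact Or.inl ⟨hx.1, hxD⟩
      · exact Or.inr (Or.inl ⟨hx.2, hxD⟩)
    have h5 : p.real (symmDiff H (D n)) + q.real (symmDiff H (D n)) ≤ ε := by
      rw [← measureReal_add_apply]
      exact ENNReal.toReal_le_of_le_ofReal hε.le hn.le
    have h6 : p.real A ≤ m (A ∩ D n) + ε := by
      rw [hm _ hAD]; linarith
    calc p A = ENNReal.ofReal (p.real A) := (ofReal_measureReal (by simp)).symm
      _ ≤ ENNReal.ofReal (m (A ∩ D n) + ε) := ENNReal.ofReal_le_ofReal h6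
      _ ≤ ENNReal.ofReal (m (A ∩ D n)) + ENNReal.ofReal ε := ENNReal.ofReal_add_le
      _ ≤ (⨆ n, ENNReal.ofReal (m (A ∩ D n))) + ε := by
        rw [ENNReal.ofReal_coe_nnreal]
        gcongr
        exact le_iSup (fun n => ENNReal.ofReal (m (A ∩ D n))) n
  · refine iSup_le fun n => ?_
    rw [← ofReal_measureReal (μ := p) (s := A) (by simp)]
    apply ENNReal.ofReal_le_ofReal
    rw [hm _ (hA.inter (hD n))]
    have h1 : p.real (A ∩ D n) ≤ p.real A := measureReal_mono Set.inter_subset_left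
    have h2 : 0 ≤ q.real (A ∩ D n) := measureReal_nonneg
    linarith

/-- If a nonnegative set-additive functional `Φ` of finite measures dominates each functional
`a ↦ ∫ gₙ da`, then it dominates `a ↦ ∫ sup gₙ da`: for `max g h`, split `a` along `{g ≤ h}`. -/
theorem lintegral_iSup_le_of_forall_max {Ω : Type*} [MeasurableSpace Ω]
    {Φ : Measure Ω → ℝ} {g : ℕ → Ω → ℝ≥0∞} (hg : ∀ n, Measurable (g n))
    (hΦ0 : ∀ (a : Measure Ω) [IsFiniteMeasure a], 0 ≤ Φ a)
    (hΦ : ∀ (a : Measure Ω) [IsFiniteMeasure a] (B : Set Ω), MeasurableSet B →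
      Φ (a.restrict B) + Φ (a.restrict Bᶜ) = Φ a)
    (hgΦ : ∀ n (a : Measure Ω) [IsFiniteMeasure a], ∫⁻ x, g n x ∂a ≤ ENNReal.ofReal (Φ a))
    (a : Measure Ω) [IsFiniteMeasure a] :
    ∫⁻ x, ⨆ n, g n x ∂a ≤ ENNReal.ofReal (Φ a) := by
  have hmeas : ∀ N, Measurable (partialSups g N) := by
    intro N
    induction N with
    | zero => simpa using hg 0
    | succ N ih => rw [partialSups_add_one]; exact ih.sup (hg _)
  have key : ∀ N (a : Measure Ω) [IsFiniteMeasure a],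
      ∫⁻ x, partialSups g N x ∂a ≤ ENNReal.ofReal (Φ a) := by
    intro N
    induction N with
    | zero => simpa using hgΦ 0
    | succ N ih =>
      intro a _
      have hB : MeasurableSet {x | partialSups g N x ≤ g (N + 1) x} :=
        measurableSet_le (hmeas N) (hg _)
      rw [partialSups_add_one, ← lintegral_add_compl _ hB, ← hΦ a _ hB,
        ENNReal.ofReal_add (hΦ0 _) (hΦ0 _)]
      refine add_le_add (le_trans (le_of_eq ?_) (hgΦ (N + 1) _)) (le_trans (le_of_eq ?_) (ih _))
      · exact setLIntegral_congr_fun hB fun x hx => sup_eq_right.2 hx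
      · exact setLIntegral_congr_fun hB.compl fun x hx => sup_eq_left.2 ((le_total _ _).resolve_left hx)
  have h1 : ∀ x, ⨆ n, g n x = ⨆ N, partialSups g N x := by
    intro x
    rw [← iSup_apply, ← iSup_apply, iSup_partialSups_eq]
  simp_rw [h1]
  rw [lintegral_iSup hmeas (fun i j hij => (partialSups g).monotone hij)]
  exact iSup_le fun N => key N a

/-- The positive part `T ∨ 0` of a weakly continuous operator `T` with kernel `k` exists and is
given by the finite kernel `x ↦ (k x)⁺`. -/
theorem IsWC.exists_posPart {Ω : Type*} [MeasurableSpace Ω]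
    [MeasurableSpace.CountablyGenerated Ω] {T : SignedMeasure Ω →ₗ[ℝ] SignedMeasure Ω}
    (hT : IsWC T) :
    ∃ κ : Kernel Ω Ω, ∃ _ : IsFiniteKernel κ, OpLE T (kernelOp κ) ∧
      ∀ R, OpLE 0 R → OpLE T R → OpLE (kernelOp κ) R := by
  obtain ⟨k, hk, hTk⟩ := hT
  obtain ⟨D, hD, hdense⟩ := exists_dense_seq Ω
  have hsup : ∀ x A, MeasurableSet A → (k x).toJordanDecomposition.posPart A
      = ⨆ n, ENNReal.ofReal (k x (A ∩ D n)) :=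
    fun x A hA => posPart_apply_eq_iSup hD hdense (k x) hA
  let κ : Kernel Ω Ω :=
    { toFun := fun x => (k x).toJordanDecomposition.posPart
      measurable' := by
        refine Measure.measurable_of_measurable_coe _ fun A hA => ?_
        simp_rw [hsup _ _ hA]
        exact Measurable.iSup fun n => (hk.1 _ (hA.inter (hD n))).ennreal_ofReal }
  have hκ : ∀ x, κ x = (k x).toJordanDecomposition.posPart := fun _ => rfl
  have hfin : IsFiniteKernel κ := by
    obtain ⟨C, hC⟩ := hk.2
    exact ⟨C, ENNReal.coe_lt_top, fun x => le_trans (Measure.le_add_right le_rfl _) (hC x)⟩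
  refine ⟨κ, hfin, opLE_iff.2 fun a _ A hA => ?_, fun R hR hTR => opLE_iff.2 fun a _ A hA => ?_⟩
  · rw [hTk _ A hA, kernelOp_apply κ _ hA, sInt_toSignedMeasure (hk.isBdMeasurable hA),
      sInt_toSignedMeasure (isBdMeasurable_real κ hA)]
    refine integral_mono ((hk.isBdMeasurable hA).integrable a)
      ((isBdMeasurable_real κ hA).integrable a) fun x => ?_
    simp only [hκ]
    rw [SignedMeasure.apply_eq_posPart_real_sub_negPart_real _ hA]
    exact sub_le_self _ measureReal_nonneg
  · rw [kernelOp_toSignedMeasure κ a hA]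
    refine ENNReal.toReal_le_of_le_ofReal (apply_nonneg hR a hA) ?_
    simp_rw [hκ, hsup _ _ hA]
    -- `toSignedMeasure` needs a finiteness instance, so the functional is extended by zero.
    classical
    let Φ : Measure Ω → ℝ := fun a =>
      if h : IsFiniteMeasure a then R (@Measure.toSignedMeasure _ _ a h) A else 0
    have hΦ : ∀ (a : Measure Ω) [h : IsFiniteMeasure a], Φ a = R a.toSignedMeasure A :=
      fun a h => dif_pos h
    rw [← hΦ a]
    refine lintegral_iSup_le_of_forall_max
      (fun n => (hk.1 _ (hA.inter (hD n))).ennreal_ofReal) ?_ ?_ ?_ a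
    · intro a _
      rw [hΦ]; exact apply_nonneg hR a hA
    · intro a _ B hB
      rw [hΦ, hΦ, hΦ, ← apply_restrict_add R a hB A]
    · intro n a _
      rw [hΦ]
      have hE := hA.inter (hD n)
      have hbd := hk.isBdMeasurable hE
      have hB : MeasurableSet {x | 0 ≤ k x (A ∩ D n)} := measurableSet_le measurable_const hbd.1
      -- Restricting `a` to `{x | 0 ≤ k x (A ∩ D n)}` turns the truncated integral into a value
      -- of `T`.
      have h1 : ∫⁻ x, ENNReal.ofReal (k x (A ∩ D n)) ∂a
          = ENNReal.ofReal (T (a.restrict {x | 0 ≤ k x (A ∩ D n)}).toSignedMeasure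
            (A ∩ D n)) := by
        rw [hTk _ _ hE, sInt_toSignedMeasure hbd,
          ofReal_integral_eq_lintegral_ofReal (hbd.integrable _)
            ((ae_restrict_mem hB).mono fun x hx => hx),
          ← lintegral_add_compl _ hB]
        convert add_zero _
        rw [setLIntegral_eq_zero_iff hB.compl hbd.1.ennreal_ofReal]
        exact ae_of_all _ fun x hx => ENNReal.ofReal_of_nonpos ((le_total _ _).resolve_left hx)
      rw [h1]
      apply ENNReal.ofReal_le_ofReal
      calc _ ≤ R (a.restrict {x | 0 ≤ k x (A ∩ D n)}).toSignedMeasure (A ∩ D n) :=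
            opLE_iff.1 hTR _ _ hE
        _ ≤ R (a.restrict {x | 0 ≤ k x (A ∩ D n)}).toSignedMeasure A :=
            apply_mono_set hR _ hE hA Set.inter_subset_left
        _ ≤ R a.toSignedMeasure A := apply_mono_measure hR Measure.restrict_le_self hA

/-! ### Suprema of sequences -/

/-- A positive operator is bounded on point masses: otherwise a series `∑ 2⁻ⁿ δ_{xₙ}` would be
mapped to a measure of infinite mass. -/
theorem exists_bound_dirac {Ω : Type*} [MeasurableSpace Ω]
    {P : SignedMeasure Ω →ₗ[ℝ] SignedMeasure Ω} (hP : OpLE 0 P) :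
    ∃ C : ℝ, ∀ x, P (Measure.dirac x).toSignedMeasure Set.univ ≤ C := by
  by_contra! hcon
  choose x hx using fun n : ℕ => hcon (n * 2 ^ n)
  let c : ℕ → ℝ≥0 := fun n => (1 / 2) ^ n
  let a : Measure Ω := Measure.sum fun n => c n • Measure.dirac (x n)
  have ha : IsFiniteMeasure a := by
    refine ⟨?_⟩
    rw [Measure.sum_apply _ MeasurableSet.univ]
    have : ∀ n, (c n • Measure.dirac (x n)) Set.univ = ((c n : ℝ≥0) : ℝ≥0∞) := by
      intro n
      rw [Measure.smul_apply, measure_univ, ENNReal.smul_def, smul_eq_mul, mul_one]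
    simp_rw [this]
    rw [lt_top_iff_ne_top, ENNReal.tsum_coe_ne_top_iff_summable, ← NNReal.summable_coe]
    simpa [c] using summable_geometric_two
  obtain ⟨n, hn⟩ := exists_nat_gt (P a.toSignedMeasure Set.univ)
  have h1 : c n • Measure.dirac (x n) ≤ a :=
    Measure.le_sum (fun n => c n • Measure.dirac (x n)) n
  have h2 := apply_mono_measure hP h1 MeasurableSet.univ
  have h3 : P (c n • Measure.dirac (x n)).toSignedMeasure Set.univ
      = (1 / 2) ^ n * P (Measure.dirac (x n)).toSignedMeasure Set.univ := by
    rw [Measure.toSignedMeasure_smul]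
    change P ((c n : ℝ) • _) Set.univ = _
    rw [map_smul, smul_apply, smul_eq_mul]
    simp [c]
  rw [h3] at h2
  have h4 : (n : ℝ) = (1 / 2) ^ n * (n * 2 ^ n) := by
    rw [mul_left_comm, ← mul_pow]; norm_num
  have h5 := mul_lt_mul_of_pos_left (hx n) (show (0 : ℝ) < (1 / 2) ^ n by positivity)
  linarith

/-- The successive suprema `T₀ ∨ ⋯ ∨ Tₙ`, written as `T₀ + ∑_{i<n} Kᵢ` with positive increments
`Kᵢ` given by finite kernels: `Kᵢ = (Tᵢ₊₁ - (T₀ ∨ ⋯ ∨ Tᵢ))⁺`. -/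
theorem exists_increments {Ω : Type*} [MeasurableSpace Ω]
    [MeasurableSpace.CountablyGenerated Ω] (T : ℕ → SignedMeasure Ω →ₗ[ℝ] SignedMeasure Ω)
    (hT : ∀ n, IsWC (T n)) :
    ∃ (δ : ℕ → Kernel Ω Ω) (_ : ∀ n, IsFiniteKernel (δ n)),
      (∀ n, OpLE (T n) (T 0 + ∑ i ∈ Finset.range n, kernelOp (δ i))) ∧
      ∀ R, (∀ n, OpLE (T n) R) →
        ∀ n, OpLE (T 0 + ∑ i ∈ Finset.range n, kernelOp (δ i)) R := by
  have step : ∀ (n : ℕ) (U : {U : SignedMeasure Ω →ₗ[ℝ] SignedMeasure Ω // IsWC U}),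
      ∃ κ : Kernel Ω Ω, ∃ _ : IsFiniteKernel κ, OpLE (T (n + 1) - U.1) (kernelOp κ) ∧
      ∀ R, OpLE 0 R → OpLE (T (n + 1) - U.1) R → OpLE (kernelOp κ) R :=
    fun n U => ((hT (n + 1)).sub U.2).exists_posPart
  choose κ hfin hle hleast using step
  let U : ℕ → {U : SignedMeasure Ω →ₗ[ℝ] SignedMeasure Ω // IsWC U} := fun n =>
    Nat.rec ⟨T 0, hT 0⟩ (fun n V => ⟨V.1 + kernelOp (κ n V), V.2.add (isWC_kernelOp _)⟩) n
  have hU : ∀ n, (U n).1 = T 0 + ∑ i ∈ Finset.range n, kernelOp (κ i (U i)) := by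
    intro n
    induction n with
    | zero => simp [U]
    | succ n ih =>
      rw [Finset.sum_range_succ, ← add_assoc, ← ih]
  refine ⟨fun n => κ n (U n), fun n => hfin n (U n), fun n => ?_, fun R hR n => ?_⟩
  · rw [← hU]
    cases n with
    | zero => exact fun μ _ => le_rfl
    | succ n =>
      intro μ hμ A hA
      have := hle n (U n) μ hμ A hA
      change _ ≤ ((U n).1 μ + kernelOp (κ n (U n)) μ) A
      rw [LinearMap.sub_apply, sub_apply] at this
      rw [add_apply]
      linarith
  · rw [← hU]
    induction n with
    | zero => exact hR 0
    | succ n ih =>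
      have h1 : OpLE (kernelOp (κ n (U n))) (R - (U n).1) := by
        refine hleast n (U n) _ ?_ (hR (n + 1)).sub
        exact OpLE.le_sub_of_add_le (by rwa [add_zero])
      intro μ hμ A hA
      have := h1 μ hμ A hA
      change ((U n).1 μ + kernelOp (κ n (U n)) μ) A ≤ _
      rw [LinearMap.sub_apply, sub_apply] at this
      rw [add_apply]
      linarith

theorem sum_kernelOp_apply {Ω : Type*} [MeasurableSpace Ω] (δ : ℕ → Kernel Ω Ω)
    [∀ n, IsFiniteKernel (δ n)] (n : ℕ) (a : Measure Ω) [IsFiniteMeasure a]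
    {A : Set Ω} (hA : MeasurableSet A) :
    ENNReal.ofReal ((∑ i ∈ Finset.range n, kernelOp (δ i)) a.toSignedMeasure A)
      = ∑ i ∈ Finset.range n, ∫⁻ x, δ i x A ∂a := by
  have hne : ∀ i, ∫⁻ x, δ i x A ∂a ≠ ∞ := by
    intro i
    rw [← Measure.bind_apply hA (δ i).aemeasurable]
    exact measure_ne_top (δ i ∘ₘ a) A
  have h : (∑ i ∈ Finset.range n, kernelOp (δ i)) a.toSignedMeasure A
      = ∑ i ∈ Finset.range n, (∫⁻ x, δ i x A ∂a).toReal := by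
    induction n with
    | zero => simp
    | succ n ih =>
      rw [Finset.sum_range_succ, Finset.sum_range_succ, LinearMap.add_apply, add_apply, ih,
        kernelOp_toSignedMeasure _ _ hA]
  rw [h, ← ENNReal.toReal_sum fun i _ => hne i,
    ENNReal.ofReal_toReal (ENNReal.sum_ne_top.2 fun i _ => hne i)]

/-- By monotone convergence, the operator of a countable sum of kernels is the supremum of the
operators of the partial sums. -/
theorem isLUB_kernelOp_sum {Ω : Type*} [MeasurableSpace Ω] (δ : ℕ → Kernel Ω Ω)
    [∀ n, IsFiniteKernel (δ n)] [IsFiniteKernel (Kernel.sum δ)] :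
    (∀ n, OpLE (∑ i ∈ Finset.range n, kernelOp (δ i)) (kernelOp (Kernel.sum δ))) ∧
      ∀ R, (∀ n, OpLE (∑ i ∈ Finset.range n, kernelOp (δ i)) R) →
        OpLE (kernelOp (Kernel.sum δ)) R := by
  have hsum : ∀ (a : Measure Ω) [IsFiniteMeasure a] (A : Set Ω), MeasurableSet A →
      ∫⁻ x, Kernel.sum δ x A ∂a = ∑' i, ∫⁻ x, δ i x A ∂a := by
    intro a _ A hA
    simp_rw [Kernel.sum_apply' _ _ hA]
    exact lintegral_tsum fun i => ((δ i).measurable_coe hA).aemeasurable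
  constructor
  · refine fun n => opLE_iff.2 fun a _ A hA => ?_
    rw [kernelOp_toSignedMeasure _ _ hA]
    have hne : ∫⁻ x, Kernel.sum δ x A ∂a ≠ ∞ := by
      rw [← Measure.bind_apply hA (Kernel.sum δ).aemeasurable]
      exact measure_ne_top (Kernel.sum δ ∘ₘ a) A
    rw [← ENNReal.ofReal_le_iff_le_toReal hne, sum_kernelOp_apply δ n a hA, hsum a A hA]
    exact ENNReal.sum_le_tsum _
  · refine fun R hR => opLE_iff.2 fun a _ A hA => ?_
    rw [kernelOp_toSignedMeasure _ _ hA]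
    have h0 : 0 ≤ R a.toSignedMeasure A := by simpa using opLE_iff.1 (hR 0) a A hA
    refine ENNReal.toReal_le_of_le_ofReal h0 ?_
    rw [hsum a A hA]
    refine ENNReal.tsum_le_of_sum_range_le fun n => ?_
    rw [← sum_kernelOp_apply δ n a hA]
    exact ENNReal.ofReal_le_ofReal (opLE_iff.1 (hR n) a A hA)

theorem stmt15 {Ω : Type*} [TopologicalSpace Ω] [PolishSpace Ω] [MeasurableSpace Ω] [BorelSpace Ω]
    (T : ℕ → SignedMeasure Ω →ₗ[ℝ] SignedMeasure Ω)
    (hwc : ∀ n, ∃ k : Ω → SignedMeasure Ω, IsBddKernel k ∧ GivenByKernel (T n) k)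
    (Bd : SignedMeasure Ω →ₗ[ℝ] SignedMeasure Ω)
    (hBd : ∀ n, ∀ μ : SignedMeasure Ω, 0 ≤ μ → T n μ ≤ Bd μ) :
    ∃ S : SignedMeasure Ω →ₗ[ℝ] SignedMeasure Ω,
      (∀ n, ∀ μ : SignedMeasure Ω, 0 ≤ μ → T n μ ≤ S μ) ∧
      (∀ R : SignedMeasure Ω →ₗ[ℝ] SignedMeasure Ω,
        (∀ n, ∀ μ : SignedMeasure Ω, 0 ≤ μ → T n μ ≤ R μ) →
        ∀ μ : SignedMeasure Ω, 0 ≤ μ → S μ ≤ R μ) ∧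
      ∃ k : Ω → SignedMeasure Ω, IsBddKernel k ∧ GivenByKernel S k := by
  obtain ⟨δ, hδ, hge, hleast⟩ := exists_increments T hwc
  have hinc : ∀ R, (∀ n, OpLE (T n) R) → ∀ n,
      OpLE (∑ i ∈ Finset.range n, kernelOp (δ i)) (R - T 0) := by
    intro R hR n
    exact (hleast R hR n).le_sub_of_add_le
  have hP : OpLE 0 (Bd - T 0) := by simpa using hinc Bd hBd 0
  obtain ⟨C, hC⟩ := exists_bound_dirac hP
  have hfin : IsFiniteKernel (Kernel.sum δ) := by
    refine ⟨ENNReal.ofReal C, ENNReal.ofReal_lt_top, fun x => ?_⟩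
    rw [Kernel.sum_apply' _ _ MeasurableSet.univ]
    refine ENNReal.tsum_le_of_sum_range_le fun n => ?_
    have h1 := sum_kernelOp_apply δ n (Measure.dirac x) MeasurableSet.univ
    simp_rw [lintegral_dirac' x ((δ _).measurable_coe MeasurableSet.univ)] at h1
    rw [← h1]
    exact ENNReal.ofReal_le_ofReal
      ((opLE_iff.1 (hinc Bd hBd n) _ _ MeasurableSet.univ).trans (hC x))
  obtain ⟨hub, hlub⟩ := isLUB_kernelOp_sum δ
  refine ⟨T 0 + kernelOp (Kernel.sum δ), fun n μ hμ => (hge n μ hμ).trans fun A hA => ?_,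
    fun R hR μ hμ A hA => ?_, (show IsWC (T 0) from hwc 0).add (isWC_kernelOp _)⟩
  · have := hub n μ hμ A hA
    simpa only [LinearMap.add_apply, add_apply, add_le_add_iff_left] using this
  · have := hlub _ (hinc R hR) μ hμ A hA
    rw [LinearMap.sub_apply, sub_apply] at this
    rw [LinearMap.add_apply, add_apply]
    linarith
end

section
/- Doob's theorem: Let (T(t))_{t≥0} be a stochastically continuous Markovian semigroup of weakly continuous operators on M(Ω) that is t₀-regular for some t₀ > 0, and suppose μ is an invariant probability measure (T(t)μ = μ for all t). Then for every finite signed measure ν, T(t)ν converges to ν(Ω)·μ in total variation norm as t → ∞; moreover μ is the unique invariant probability measure and is equivalent to k_t(x,·) for all t ≥ t₀ and x ∈ Ω. -/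
/-!
Since all transition kernels contract total variation, it suffices to understand the skeleton chain
with one-step kernel `k t₀`. Regularity and invariance make every `k t x`, `t ≥ t₀`, equivalent to
`μ`, so `k t₀ x` has a jointly measurable, almost everywhere positive density `p x y` with respect
to `μ`.

Positivity gives a uniform overlap on bounded densities (`exists_common_minorant`): once `C` and
`η > 0` are fixed, a single measure `θ` of mass at least some `ε > 0` lies below the image of every
measure `α ≤ C • μ` of mass at least `η`. Two measures below `C • μ` of equal mass thus have images
that share `θ`. Subtracting it leaves measures of equal mass that are still below `C • μ`, because
`μ` is invariant, and whose mass has dropped by at least `ε`. After finitely many steps the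
remaining mass is at most `η`, so from then on the evolved measures differ by at most `η` on every
set (`bind_le_bind_add`).

A general finite measure `α` becomes absolutely continuous with respect to `μ` after time `t₀`.
Truncating its density at a high level leaves a remainder of small mass, and the comparison above,
applied to the truncated part and the multiple of `μ` of the same mass, gives uniform convergence
on sets to `α(Ω) μ` (`exists_bind_close`). The signed case follows from the Jordan decomposition,
and the total variation is controlled by the supremum over sets through the Hahn decomposition.
Applying the estimate to an invariant probability measure gives uniqueness.
-/

open MeasureTheory Topology Filter
open scoped NNReal ENNReal BoundedContinuousFunction

/-! ### A common lower bound for images of bounded densities -/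

open ProbabilityTheory in
/-- A Markov kernel whose measures are all equivalent to `μ` maps the measures of mass at least `η`
and density at most `C` to measures with a common lower bound `θ ≠ 0`. With `q y` the `μ`-measure
of the `x` at which the density of `κ x` at `y` is at most `δ`, the density
`δ * (η - C * q y)` works for `θ` as soon as `δ` is so small that `C * ∫ q ≤ η / 2`. -/
theorem exists_common_minorant {Ω : Type*} [MeasurableSpace Ω]
    [MeasurableSpace.CountableOrCountablyGenerated Ω Ω]
    (κ : Kernel Ω Ω) [IsMarkovKernel κ] (μ : Measure Ω) [IsProbabilityMeasure μ]
    (h₁ : ∀ x, κ x ≪ μ) (h₂ : ∀ x, μ ≪ κ x) (C : ℝ≥0) {η : ℝ≥0} (hη : 0 < η) :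
    ∃ (ε : ℝ≥0) (θ : Measure Ω), 0 < ε ∧ (ε : ℝ≥0∞) ≤ θ Set.univ ∧
      ∀ α : Measure Ω, IsFiniteMeasure α → α ≤ C • μ → (η : ℝ≥0∞) ≤ α Set.univ →
        θ ≤ α.bind κ := by
  set p : Ω → Ω → ℝ≥0∞ := Kernel.rnDeriv κ (Kernel.const Ω μ) with hp
  have hpm : Measurable fun z : Ω × Ω => p z.1 z.2 := Kernel.measurable_rnDeriv _ _
  have hκ : ∀ x, μ.withDensity (p x) = κ x := fun x => by
    have := Kernel.withDensity_rnDeriv_eq (κ := κ) (η := Kernel.const Ω μ) (a := x)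
      (by simpa using h₁ x)
    rwa [Kernel.withDensity_apply _ (Kernel.measurable_rnDeriv _ _), Kernel.const_apply] at this
  have hpos : ∀ x, ∀ᵐ y ∂μ, 0 < p x y := fun x => (h₂ x).ae_le
    (Kernel.rnDeriv_pos (κ := κ) (η := Kernel.const Ω μ) (a := x) (by simpa using h₁ x))
  -- The bad sets, where the density is at most `1 / (n + 1)`, decrease to a null set.
  set B : ℕ → Set (Ω × Ω) := fun n => {z | p z.1 z.2 ≤ ((n : ℝ≥0∞) + 1)⁻¹} with hB
  have hBm : ∀ n, MeasurableSet (B n) := fun n => measurableSet_le hpm measurable_const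
  have hBanti : Antitone B := fun m n hmn z hz => by
    refine le_trans (show p z.1 z.2 ≤ ((n : ℝ≥0∞) + 1)⁻¹ from hz) ?_
    gcongr
  have hBlim : Tendsto (fun n => (μ.prod μ) (B n)) atTop (𝓝 0) := by
    have h0 : (μ.prod μ) (⋂ n, B n) = 0 := by
      rw [Measure.measure_prod_null (MeasurableSet.iInter hBm)]
      refine Eventually.of_forall fun x => ?_
      refine measure_mono_null ?_ (ae_iff.1 (hpos x))
      intro y hy hlt
      have hy' : ∀ n : ℕ, p x y ≤ ((n : ℝ≥0∞) + 1)⁻¹ := fun n => Set.mem_iInter.1 hy n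
      obtain ⟨n, hn⟩ := ENNReal.exists_inv_nat_lt hlt.ne'
      have := (hy' n).trans (ENNReal.inv_le_inv.2 (le_self_add : (n : ℝ≥0∞) ≤ n + 1))
      exact absurd (this.trans_lt hn) (lt_irrefl _)
    rw [← h0]
    exact tendsto_measure_iInter_atTop (fun n => (hBm n).nullMeasurableSet) hBanti
      ⟨0, measure_ne_top _ _⟩
  have hBlim' : Tendsto (fun n => (C : ℝ≥0∞) * (μ.prod μ) (B n)) atTop (𝓝 0) := by
    simpa using ENNReal.Tendsto.const_mul hBlim (Or.inr ENNReal.coe_ne_top)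
  have hη2 : (0 : ℝ≥0∞) < ((η / 2 : ℝ≥0) : ℝ≥0∞) := by
    exact_mod_cast half_pos hη
  obtain ⟨n, hn⟩ := (hBlim'.eventually (ge_mem_nhds hη2)).exists
  set δ : ℝ≥0 := ((n : ℝ≥0) + 1)⁻¹ with hδ
  have hδ0 : 0 < δ := by positivity
  have hδc : ((n : ℝ≥0∞) + 1)⁻¹ = (δ : ℝ≥0∞) := by
    rw [hδ, ENNReal.coe_inv (by positivity)]; simp
  set q : Ω → ℝ≥0∞ := fun y => μ {x | (x, y) ∈ B n} with hq
  have hqm : Measurable q := measurable_measure_prodMk_right (hBm n)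
  have hqi : ∫⁻ y, q y ∂μ = (μ.prod μ) (B n) := (Measure.prod_apply_symm (hBm n)).symm
  refine ⟨δ * (η / 2), μ.withDensity fun y => δ * (η - C * q y), by positivity, ?_, ?_⟩
  · rw [withDensity_apply _ MeasurableSet.univ, Measure.restrict_univ,
      lintegral_const_mul _ (by fun_prop), ENNReal.coe_mul]
    gcongr
    refine le_trans ?_ (lintegral_sub_le _ _ (by fun_prop))
    rw [lintegral_const_mul _ hqm, hqi, lintegral_const, measure_univ, mul_one]
    refine ENNReal.le_sub_of_add_le_left (ne_top_of_le_ne_top ENNReal.coe_ne_top hn) ?_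
    refine (add_le_add_left hn _).trans ?_
    rw [← ENNReal.coe_add, add_halves]
  · intro α hα hαC hαη
    refine Measure.le_iff.2 fun A hA => ?_
    rw [Measure.bind_apply hA κ.measurable.aemeasurable, withDensity_apply _ hA]
    have hstep : ∀ y, (δ : ℝ≥0∞) * (η - C * q y) ≤
        ∫⁻ x, (B n)ᶜ.indicator (fun _ => (δ : ℝ≥0∞)) (x, y) ∂α := by
      intro y
      have hSm : MeasurableSet {x | (x, y) ∈ B n} := measurable_prodMk_right (hBm n)
      have e : ∫⁻ x, (B n)ᶜ.indicator (fun _ => (δ : ℝ≥0∞)) (x, y) ∂α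
          = δ * α {x | (x, y) ∈ B n}ᶜ := by
        rw [← lintegral_indicator_const hSm.compl]; rfl
      rw [e]
      gcongr
      rw [tsub_le_iff_right]
      refine hαη.trans ?_
      rw [← measure_add_measure_compl hSm, add_comm]
      gcongr
      simpa using hαC {x | (x, y) ∈ B n}
    calc ∫⁻ y in A, δ * (η - C * q y) ∂μ
        ≤ ∫⁻ y in A, ∫⁻ x, (B n)ᶜ.indicator (fun _ => (δ : ℝ≥0∞)) (x, y) ∂α ∂μ :=
          lintegral_mono hstep
      _ = ∫⁻ x, ∫⁻ y in A, (B n)ᶜ.indicator (fun _ => (δ : ℝ≥0∞)) (x, y) ∂μ ∂α := by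
          refine lintegral_lintegral_swap (f := fun y x =>
            (B n)ᶜ.indicator (fun _ => (δ : ℝ≥0∞)) (x, y)) (Measurable.aemeasurable ?_)
          exact (measurable_const.indicator (hBm n).compl).comp measurable_swap
      _ ≤ ∫⁻ x, ∫⁻ y in A, p x y ∂μ ∂α := by
          refine lintegral_mono fun x => lintegral_mono fun y => ?_
          by_cases hxy : (x, y) ∈ B n
          · simp [hxy]
          · rw [Set.indicator_of_mem (show (x, y) ∈ (B n)ᶜ from hxy), ← hδc]
            exact (not_le.1 (show ¬ p x y ≤ _ from hxy)).le
      _ = ∫⁻ x, κ x A ∂α := by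
          refine lintegral_congr fun x => ?_
          rw [← hκ x, withDensity_apply _ hA]

/-! ### Linearity, monotonicity and mass of the action on measures -/

section Bind
variable {Ω : Type*} [MeasurableSpace Ω] {f : Ω → Measure Ω}

theorem bind_univ_of_prob (hf : Measurable f) (hfp : ∀ x, IsProbabilityMeasure (f x))
    (α : Measure Ω) : α.bind f Set.univ = α Set.univ := by
  simp [Measure.bind_apply MeasurableSet.univ hf.aemeasurable]

theorem bind_add_left (hf : Measurable f) (α β : Measure Ω) :
    (α + β).bind f = α.bind f + β.bind f := by
  ext A hA
  simp [Measure.bind_apply hA hf.aemeasurable, lintegral_add_measure]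

theorem bind_mono_left (hf : Measurable f) {α β : Measure Ω} (h : α ≤ β) :
    α.bind f ≤ β.bind f := by
  refine Measure.le_iff.2 fun A hA => ?_
  rw [Measure.bind_apply hA hf.aemeasurable, Measure.bind_apply hA hf.aemeasurable]
  exact lintegral_mono' h le_rfl

end Bind

/-! ### Convergence on sets for finite measures -/

section Semigroup
variable {Ω : Type*} [MeasurableSpace Ω] {k : ℝ≥0 → Ω → Measure Ω}
  (hm : ∀ t, Measurable (k t)) (hprob : ∀ t x, IsProbabilityMeasure (k t x))
  (hsemi : ∀ (a b : ℝ≥0) (α : Measure Ω), α.bind (k (a + b)) = (α.bind (k b)).bind (k a))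
  {μ : Measure Ω} (hinv : ∀ t, μ.bind (k t) = μ)

include hm hprob hsemi hinv

/-- Measures of equal mass at most `η + n * ε` and density at most `C` differ by at most `η` on
every set after long enough time. The induction on `n` cancels the common part `θ` of the images
under `k t₀`, which has mass at least `ε`. -/
theorem bind_le_bind_add {t₀ : ℝ≥0} {C η ε : ℝ≥0} {θ : Measure Ω} (hθε : (ε : ℝ≥0∞) ≤ θ Set.univ)
    (hθ : ∀ α : Measure Ω, IsFiniteMeasure α → α ≤ C • μ → (η : ℝ≥0∞) ≤ α Set.univ →
        θ ≤ α.bind (k t₀)) (n : ℕ) :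
    ∀ α β : Measure Ω, IsFiniteMeasure α → IsFiniteMeasure β → α ≤ C • μ → β ≤ C • μ →
      α Set.univ = β Set.univ → α Set.univ ≤ η + n * ε →
      ∃ s, ∀ t, s ≤ t → ∀ A, MeasurableSet A →
        α.bind (k t) A ≤ β.bind (k t) A + η := by
  induction n with
  | zero =>
    intro α β _ _ _ _ _ h
    refine ⟨0, fun t _ A _ => ?_⟩
    calc α.bind (k t) A ≤ α.bind (k t) Set.univ := measure_mono (Set.subset_univ _)
      _ = α Set.univ := bind_univ_of_prob (hm t) (hprob t) α
      _ ≤ η := by simpa using h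
      _ ≤ _ := le_add_self
  | succ n ih =>
    intro α β hα hβ hαC hβC hαβ h
    by_cases hle : α Set.univ ≤ η
    · refine ⟨0, fun t _ A _ => ?_⟩
      calc α.bind (k t) A ≤ α.bind (k t) Set.univ := measure_mono (Set.subset_univ _)
        _ = α Set.univ := bind_univ_of_prob (hm t) (hprob t) α
        _ ≤ η := hle
        _ ≤ _ := le_add_self
    have hη : (η : ℝ≥0∞) ≤ α Set.univ := (not_le.1 hle).le
    have hθα := hθ α hα hαC hη
    have hθβ := hθ β hβ hβC (hαβ ▸ hη)
    have huα := bind_univ_of_prob (hm t₀) (hprob t₀) α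
    have huβ := bind_univ_of_prob (hm t₀) (hprob t₀) β
    have hfα : IsFiniteMeasure (α.bind (k t₀)) := ⟨by rw [huα]; exact measure_lt_top _ _⟩
    have hfβ : IsFiniteMeasure (β.bind (k t₀)) := ⟨by rw [huβ]; exact measure_lt_top _ _⟩
    have hfθ : IsFiniteMeasure θ := isFiniteMeasure_of_le _ hθα
    have hdom : ∀ γ : Measure Ω, γ ≤ C • μ → γ.bind (k t₀) ≤ C • μ := fun γ hγ => by
      refine (bind_mono_left (hm t₀) hγ).trans ?_
      rw [Measure.bind_smul, hinv]
    have eα := Measure.sub_add_cancel_of_le hθα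
    have eβ := Measure.sub_add_cancel_of_le hθβ
    set α' := α.bind (k t₀) - θ
    set β' := β.bind (k t₀) - θ
    have hα'le : α' ≤ α.bind (k t₀) := Measure.sub_le
    have hβ'le : β' ≤ β.bind (k t₀) := Measure.sub_le
    have mα : α' Set.univ + θ Set.univ = α Set.univ := by
      rw [← huα, ← eα, Measure.add_apply]
    have mβ : β' Set.univ + θ Set.univ = β Set.univ := by
      rw [← huβ, ← eβ, Measure.add_apply]
    obtain ⟨s, hs⟩ := ih α' β' (isFiniteMeasure_of_le _ hα'le) (isFiniteMeasure_of_le _ hβ'le)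
      (hα'le.trans (hdom α hαC)) (hβ'le.trans (hdom β hβC))
      ((ENNReal.add_left_inj (measure_ne_top θ _)).1 (by rw [mα, mβ, hαβ]))
      (by
        refine (ENNReal.add_le_add_iff_right (ENNReal.coe_ne_top (r := ε))).1 ?_
        calc α' Set.univ + ε ≤ α' Set.univ + θ Set.univ := by gcongr
          _ = α Set.univ := mα
          _ ≤ _ := h
          _ = _ := by push_cast; ring)
    refine ⟨s + t₀, fun t ht A hA => ?_⟩
    have ht' : t = (t - t₀) + t₀ := (tsub_add_cancel_of_le (le_add_self.trans ht)).symm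
    have := hs (t - t₀) (le_tsub_of_add_le_right ht) A hA
    rw [ht', hsemi, hsemi, ← eα, ← eβ, bind_add_left (hm _), bind_add_left (hm _),
      Measure.add_apply, Measure.add_apply, add_right_comm]
    gcongr

/-- The evolution of a finite measure `α` converges to `α(Ω) μ` uniformly over measurable sets. -/
theorem exists_bind_close [IsProbabilityMeasure μ] {t₀ : ℝ≥0}
    (hac : ∀ x, k t₀ x ≪ μ)
    (hminor : ∀ (C η : ℝ≥0), 0 < η → ∃ (ε : ℝ≥0) (θ : Measure Ω), 0 < ε ∧
      (ε : ℝ≥0∞) ≤ θ Set.univ ∧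
      ∀ α : Measure Ω, IsFiniteMeasure α → α ≤ C • μ → (η : ℝ≥0∞) ≤ α Set.univ →
        θ ≤ α.bind (k t₀))
    (α : Measure Ω) [IsFiniteMeasure α] {η : ℝ≥0} (hη : 0 < η) :
    ∃ s, ∀ t, s ≤ t → ∀ A, MeasurableSet A →
      α.bind (k t) A ≤ α Set.univ * μ A + η ∧ α Set.univ * μ A ≤ α.bind (k t) A + η := by
  set a := α.bind (k t₀) with ha
  have hua : a Set.univ = α Set.univ := bind_univ_of_prob (hm t₀) (hprob t₀) α
  have hfa : IsFiniteMeasure a := ⟨by rw [hua]; exact measure_lt_top _ _⟩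
  have haμ : a ≪ μ := by
    refine Measure.AbsolutelyContinuous.mk fun A hA h0 => ?_
    rw [ha, Measure.bind_apply hA (hm t₀).aemeasurable]
    simp [fun x => hac x h0]
  set f := a.rnDeriv μ with hf
  have hfm : Measurable f := Measure.measurable_rnDeriv _ _
  have hfd : μ.withDensity f = a := Measure.withDensity_rnDeriv_eq _ _ haμ
  -- The mass of `a` above density level `N` is small for large `N`.
  have hlim : Tendsto (fun N : ℕ => ∫⁻ x, (f x - N) ∂μ) atTop (𝓝 0) := by
    have := tendsto_lintegral_of_dominated_convergence (μ := μ)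
      (F := fun (N : ℕ) x => f x - N) (f := fun _ => 0) f (fun N => by fun_prop)
      (fun N => Eventually.of_forall fun x => tsub_le_self)
      (Measure.lintegral_rnDeriv_lt_top _ _).ne
      (by
        filter_upwards [Measure.rnDeriv_lt_top a μ] with x hx
        have hx' : f x ≠ ∞ := hx.ne
        obtain ⟨m, hmx⟩ := ENNReal.exists_nat_gt hx'
        refine tendsto_const_nhds.congr' ?_
        filter_upwards [eventually_ge_atTop m] with N hN
        exact (tsub_eq_zero_of_le (hmx.le.trans (by exact_mod_cast hN))).symm)
    simpa using this
  have hη2 : (0 : ℝ≥0∞) < ((η / 2 : ℝ≥0) : ℝ≥0∞) := by exact_mod_cast half_pos hη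
  obtain ⟨N, hN⟩ := (hlim.eventually (ge_mem_nhds hη2)).exists
  set r := μ.withDensity fun x => f x - N with hr
  set γ := μ.withDensity fun x => min (f x) N with hγ
  have hsplit : γ + r = a := by
    rw [hγ, hr, ← withDensity_add_left (by fun_prop), ← hfd]
    congr 1
    ext x
    simp only [Pi.add_apply]
    rw [add_comm]; exact tsub_add_min
  have hr2 : r Set.univ ≤ (η / 2 : ℝ≥0) := by
    rwa [hr, withDensity_apply _ MeasurableSet.univ, Measure.restrict_univ]
  have hfγ : IsFiniteMeasure γ := isFiniteMeasure_of_le a (hsplit ▸ Measure.le_add_right le_rfl)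
  have hγN : γ ≤ (N : ℝ≥0) • μ := by
    refine Measure.le_iff.2 fun A hA => ?_
    rw [hγ, withDensity_apply _ hA]
    calc ∫⁻ x in A, min (f x) N ∂μ ≤ ∫⁻ x in A, N ∂μ := lintegral_mono fun x => min_le_right _ _
      _ = _ := by simp [ENNReal.smul_def]
  set m : ℝ≥0 := (γ Set.univ).toNNReal with hmdef
  have hmγ : (m : ℝ≥0∞) = γ Set.univ := ENNReal.coe_toNNReal (measure_ne_top _ _)
  -- `C` bounds the densities of both the truncated part `γ` and its limit `m • μ`.
  set C : ℝ≥0 := max N m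
  have hCle : ∀ c : ℝ≥0, c ≤ C → c • μ ≤ C • μ := fun c hc => by
    refine Measure.le_iff.2 fun A hA => ?_
    simp only [Measure.smul_apply, ENNReal.smul_def, smul_eq_mul]
    gcongr
  obtain ⟨ε, θ, hε, hθε, hθ⟩ := hminor C (η / 2) (half_pos hη)
  -- `n` reductions of the mass by `ε` exhaust the mass `m`.
  obtain ⟨n, hn⟩ := exists_nat_ge (m / ε)
  have hn' : γ Set.univ ≤ ((η / 2 : ℝ≥0) : ℝ≥0∞) + n * ε := by
    rw [← hmγ]
    refine le_trans ?_ le_add_self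
    exact_mod_cast (div_le_iff₀ hε).1 hn
  have hmu : (m • μ) Set.univ = γ Set.univ := by
    simp [ENNReal.smul_def, hmγ]
  obtain ⟨s₁, hs₁⟩ := bind_le_bind_add hm hprob hsemi hinv hθε hθ n γ (m • μ) hfγ inferInstance
    (hγN.trans (hCle _ (le_max_left _ _))) (hCle _ (le_max_right _ _)) hmu.symm hn'
  obtain ⟨s₂, hs₂⟩ := bind_le_bind_add hm hprob hsemi hinv hθε hθ n (m • μ) γ inferInstance hfγ
    (hCle _ (le_max_right _ _)) (hγN.trans (hCle _ (le_max_left _ _))) hmu (hmu ▸ hn')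
  have hhalf : ((η / 2 : ℝ≥0) : ℝ≥0∞) + ((η / 2 : ℝ≥0) : ℝ≥0∞) = η := by
    rw [← ENNReal.coe_add, add_halves]
  refine ⟨max s₁ s₂ + t₀, fun t ht A hA => ?_⟩
  have ht' : t = (t - t₀) + t₀ := (tsub_add_cancel_of_le (le_add_self.trans ht)).symm
  have hmax : max s₁ s₂ ≤ t - t₀ := le_tsub_of_add_le_right ht
  have H₁ := hs₁ (t - t₀) ((le_max_left _ _).trans hmax) A hA
  have H₂ := hs₂ (t - t₀) ((le_max_right _ _).trans hmax) A hA
  rw [Measure.bind_smul, hinv] at H₁ H₂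
  have hmA : (m • μ) A = γ Set.univ * μ A := by simp [ENNReal.smul_def, hmγ]
  rw [hmA] at H₁ H₂
  have hrA : r.bind (k (t - t₀)) A ≤ (η / 2 : ℝ≥0) :=
    (measure_mono (Set.subset_univ _)).trans
      ((bind_univ_of_prob (hm _) (hprob _) r).trans_le hr2)
  have hu : α Set.univ = γ Set.univ + r Set.univ := by rw [← hua, ← hsplit, Measure.add_apply]
  rw [ht', hsemi, ← ha, ← hsplit, bind_add_left (hm _), Measure.add_apply, hu, ← hhalf]
  constructor
  · calc _ ≤ (γ Set.univ * μ A + (η / 2 : ℝ≥0)) + (η / 2 : ℝ≥0) := add_le_add H₁ hrA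
      _ ≤ _ := by rw [add_assoc]; gcongr; exact le_self_add
  · rw [add_mul]
    calc _ ≤ (γ.bind (k (t - t₀)) A + (η / 2 : ℝ≥0)) + (η / 2 : ℝ≥0) * 1 := by
          gcongr
          exact prob_le_one
      _ ≤ _ := by rw [mul_one, add_assoc]; gcongr; exact le_self_add

end Semigroup

/-! ### Total variation and the theorem -/

/-- Evaluating the bound on the two halves of a Hahn decomposition gives the factor `2`. -/
theorem totalVariation_univ_le {Ω : Type*} [MeasurableSpace Ω] (s : SignedMeasure Ω) {c : ℝ}
    (h : ∀ A, MeasurableSet A → |s A| ≤ c) : (s.totalVariation Set.univ).toReal ≤ 2 * c := by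
  obtain ⟨i, hi₁, hi₂, hi₃, hp, hn⟩ := s.toJordanDecomposition_spec
  have e₁ : s.toJordanDecomposition.posPart.real Set.univ = s i := by
    rw [hp, SignedMeasure.toMeasureOfZeroLE_real_apply _ hi₂ hi₁ MeasurableSet.univ,
      Set.inter_univ]
  have e₂ : s.toJordanDecomposition.negPart.real Set.univ = - s iᶜ := by
    rw [hn, SignedMeasure.toMeasureOfLEZero_real_apply _ hi₃ hi₁.compl MeasurableSet.univ,
      Set.inter_univ]
  rw [SignedMeasure.totalVariation, Measure.add_apply,
    ENNReal.toReal_add (measure_ne_top _ _) (measure_ne_top _ _)]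
  have := le_abs_self (s i)
  have := neg_abs_le (s iᶜ)
  have := h i hi₁
  have := h iᶜ hi₁.compl
  simp only [Measure.real] at e₁ e₂
  linarith

theorem stmt18 {Ω : Type*} [TopologicalSpace Ω] [PolishSpace Ω] [MeasurableSpace Ω] [BorelSpace Ω]
    (k : ℝ≥0 → Ω → Measure Ω)
    (hprob : ∀ t x, IsProbabilityMeasure (k t x))
    (hmeas : ∀ (t : ℝ≥0) (A : Set Ω), MeasurableSet A → Measurable fun x => k t x A)
    (hCK : ∀ (a b : ℝ≥0) (x : Ω) (A : Set Ω), MeasurableSet A →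
      k (a + b) x A = ∫⁻ y, k a y A ∂(k b x))
    (hid : ∀ (x : Ω) (A : Set Ω), MeasurableSet A → k 0 x A = Measure.dirac x A)
    (hsc : ∀ (f : Ω →ᵇ ℝ) (x : Ω),
      Tendsto (fun t : ℝ≥0 => ∫ y, f y ∂(k t x)) (𝓝[>] 0) (𝓝 (f x)))
    (t₀ : ℝ≥0) (ht₀ : 0 < t₀)
    (hreg : ∀ x y : Ω, k t₀ x ≪ k t₀ y)
    (μ : Measure Ω) [IsProbabilityMeasure μ]
    (hinv : ∀ (t : ℝ≥0) (A : Set Ω), MeasurableSet A → ∫⁻ x, k t x A ∂μ = μ A)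
    (T : ℝ≥0 → SignedMeasure Ω →ₗ[ℝ] SignedMeasure Ω)
    (hT : ∀ (t : ℝ≥0) (ν : SignedMeasure Ω) (A : Set Ω), MeasurableSet A →
      T t ν A = sInt ν fun x => (k t x A).toReal) :
    (∀ ν : SignedMeasure Ω,
      Tendsto (fun t : ℝ≥0 =>
          ((T t ν - ν Set.univ • μ.toSignedMeasure).totalVariation Set.univ).toReal)
        atTop (𝓝 0)) ∧
    (∀ μ' : Measure Ω, IsProbabilityMeasure μ' →
      (∀ (t : ℝ≥0) (A : Set Ω), MeasurableSet A → ∫⁻ x, k t x A ∂μ' = μ' A) → μ' = μ) ∧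
    (∀ t : ℝ≥0, t₀ ≤ t → ∀ x : Ω, μ ≪ k t x ∧ k t x ≪ μ) := by
  have hm : ∀ t, Measurable (k t) := fun t => Measure.measurable_of_measurable_coe _ (hmeas t)
  have hbind : ∀ (α : Measure Ω) t A, MeasurableSet A → α.bind (k t) A = ∫⁻ x, k t x A ∂α :=
    fun α t A hA => Measure.bind_apply hA (hm t).aemeasurable
  have hsemi : ∀ (a b : ℝ≥0) (α : Measure Ω),
      α.bind (k (a + b)) = (α.bind (k b)).bind (k a) := fun a b α => by
    rw [Measure.bind_bind (hm b).aemeasurable (hm a).aemeasurable]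
    congr 1
    ext x A hA
    rw [hCK a b x A hA, hbind _ _ _ hA]
  have hinvb : ∀ μ' : Measure Ω,
      (∀ (t : ℝ≥0) (A : Set Ω), MeasurableSet A → ∫⁻ x, k t x A ∂μ' = μ' A) →
      ∀ t, μ'.bind (k t) = μ' := fun μ' h t => by
    ext A hA
    rw [hbind _ _ _ hA, h t A hA]
  -- For `t ≥ t₀` the null sets of `k t x`, and those of `μ`, are the sets that are null for every
  -- `k t₀ y`: both measures are mixtures of the mutually equivalent `k t₀ y`.
  have hnull : ∀ t, t₀ ≤ t → ∀ x A, MeasurableSet A → (k t x A = 0 ↔ ∀ y, k t₀ y A = 0) := by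
    intro t ht x A hA
    have : t = t₀ + (t - t₀) := (add_tsub_cancel_of_le ht).symm
    rw [this, hCK _ _ _ _ hA, lintegral_eq_zero_iff (hmeas _ _ hA)]
    constructor
    · intro h y
      obtain ⟨z, hz⟩ := h.exists
      exact hreg y z hz
    · exact fun h => Eventually.of_forall h
  have hnullμ : ∀ A, MeasurableSet A → (μ A = 0 ↔ ∀ y, k t₀ y A = 0) := by
    intro A hA
    rw [← hinv t₀ A hA, lintegral_eq_zero_iff (hmeas _ _ hA)]
    constructor
    · intro h y
      obtain ⟨z, hz⟩ := h.exists
      exact hreg y z hz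
    · exact fun h => Eventually.of_forall h
  have hequiv : ∀ t : ℝ≥0, t₀ ≤ t → ∀ x : Ω, μ ≪ k t x ∧ k t x ≪ μ := fun t ht x =>
    ⟨.mk fun A hA h => (hnullμ A hA).2 ((hnull t ht x A hA).1 h),
      .mk fun A hA h => (hnull t ht x A hA).2 ((hnullμ A hA).1 h)⟩
  have hclose := fun (α : Measure Ω) (_ : IsFiniteMeasure α) (η : ℝ≥0) (hη : 0 < η) =>
    exists_bind_close hm hprob hsemi (hinvb μ hinv) (fun x => (hequiv t₀ le_rfl x).2)
      (fun C η hη => by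
        let κ : ProbabilityTheory.Kernel Ω Ω := ⟨k t₀, hm t₀⟩
        have : ProbabilityTheory.IsMarkovKernel κ := ⟨hprob t₀⟩
        exact exists_common_minorant κ μ (fun x => (hequiv t₀ le_rfl x).2)
          (fun x => (hequiv t₀ le_rfl x).1) C hη) α hη
  -- The same estimate in terms of real integrals.
  have hreal : ∀ α : Measure Ω, IsFiniteMeasure α → ∀ η : ℝ≥0, 0 < η → ∃ s, ∀ t, s ≤ t →
      ∀ A, MeasurableSet A →
        |∫ x, (k t x A).toReal ∂α - α.real Set.univ * μ.real A| ≤ η := by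
    intro α hα η hη
    obtain ⟨s, hs⟩ := hclose α hα η hη
    refine ⟨s, fun t ht A hA => ?_⟩
    obtain ⟨h₁, h₂⟩ := hs t ht A hA
    have hI : ∫ x, (k t x A).toReal ∂α = (α.bind (k t) A).toReal := by
      rw [hbind _ _ _ hA, integral_toReal (hmeas t A hA).aemeasurable
        (Eventually.of_forall fun x => measure_lt_top _ _)]
    have hfin : α.bind (k t) A ≠ ∞ := by
      refine ne_top_of_le_ne_top (measure_ne_top α Set.univ) ?_
      rw [← bind_univ_of_prob (hm t) (hprob t) α]
      exact measure_mono (Set.subset_univ _)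
    have hfin' : α Set.univ * μ A ≠ ∞ := by finiteness
    have h₁' := ENNReal.toReal_mono (by finiteness) h₁
    have h₂' := ENNReal.toReal_mono (by finiteness) h₂
    rw [ENNReal.toReal_add hfin' ENNReal.coe_ne_top, ENNReal.toReal_mul,
      ENNReal.coe_toReal] at h₁'
    rw [ENNReal.toReal_add hfin ENNReal.coe_ne_top, ENNReal.toReal_mul,
      ENNReal.coe_toReal] at h₂'
    rw [hI, abs_le, Measure.real, Measure.real]
    constructor <;> linarith
  refine ⟨fun ν => ?_, fun μ' hμ' hinv' => ?_, hequiv⟩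
  · rw [Metric.tendsto_atTop]
    intro e he
    -- Two Jordan parts and two Hahn halves cost `4 * (e / 5) < e`.
    set η : ℝ≥0 := ⟨e / 5, by positivity⟩ with hηdef
    have hη : 0 < η := by
      rw [← NNReal.coe_pos]; change 0 < e / 5; positivity
    obtain ⟨s₁, hs₁⟩ := hreal ν.toJordanDecomposition.posPart inferInstance η hη
    obtain ⟨s₂, hs₂⟩ := hreal ν.toJordanDecomposition.negPart inferInstance η hη
    refine ⟨max s₁ s₂, fun t ht => ?_⟩
    rw [Real.dist_eq, sub_zero, abs_of_nonneg ENNReal.toReal_nonneg]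
    have hνu : ν Set.univ = ν.toJordanDecomposition.posPart.real Set.univ
        - ν.toJordanDecomposition.negPart.real Set.univ := by
      conv_lhs => rw [← ν.toSignedMeasure_toJordanDecomposition]
      rw [JordanDecomposition.toSignedMeasure,
        Measure.toSignedMeasure_sub_apply MeasurableSet.univ]
    refine (totalVariation_univ_le _ (c := 2 * (e / 5)) fun A hA => ?_).trans_lt (by linarith)
    have H₁ := abs_le.1 (hs₁ t ((le_max_left _ _).trans ht) A hA)
    have H₂ := abs_le.1 (hs₂ t ((le_max_right _ _).trans ht) A hA)
    have hηe : (η : ℝ) = e / 5 := rfl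
    rw [hηe] at H₁ H₂
    have hval : (T t ν - ν Set.univ • μ.toSignedMeasure) A =
        T t ν A - ν Set.univ * μ.real A := by
      simp [Measure.toSignedMeasure_apply_measurable hA]
    rw [hval, hT t ν A hA, sInt, hνu, sub_mul, abs_le]
    constructor <;> linarith [H₁.1, H₁.2, H₂.1, H₂.2]
  · ext A hA
    refine le_antisymm ?_ ?_
    all_goals
      refine ENNReal.le_of_forall_pos_le_add fun η hη _ => ?_
      obtain ⟨s, hs⟩ := hclose μ' inferInstance η hη
      have := hs s le_rfl A hA
      rw [hinvb μ' hinv', measure_univ, one_mul] at this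
    · exact this.1
    · exact this.2
end
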